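/- arXiv:2302.07688 — 2 statements merged into one kernel-verified Lean document; each statement's English description precedes it below -/
import Mathlib

section
/- Let n, m, t be natural numbers with m + t ≤ n, let S ⊆ Fin n with |S| = t, and let 𝓖 be a nonempty finite 2^{−m}-almost-universal₂ family of functions from (Fin n → ZMod 2) to (Fin m → ZMod 2) (as realized, e.g., by Toeplitz hashing). On the probability space Ω = (Fin n → ZMod 2) × 𝓖 with the uniform measure, define K_au(x, g) = g(x), E(x, g) = the restriction of x to S, and G(x, g) = g. Then, writing s = n − t − m, the mutual information (in nats) satisfies I[K_au : (E, G)] ≤ 2^{−s}. -/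
/-- A finite family `𝓖` of functions from `R` to `T` is `ε`-almost-universal₂. -/
def AlmostUniversal₂ {R T : Type*} [DecidableEq T] (ε : ℝ) (𝓖 : Finset (R → T)) : Prop :=
  ∀ r r' : R, r ≠ r' →
    (((𝓖.filter fun g => g r = g r').card : ℝ) / (𝓖.card : ℝ)) ≤ ε

/-- Mutual information (in nats) between the finitely-valued random variables `X` and `Y`
on a finite probability space with probability mass function `P`. -/
noncomputable def mutualInfo {Ω A B : Type*} [Fintype Ω] [Fintype A] [Fintype B]
    [DecidableEq A] [DecidableEq B] (P : Ω → ℝ) (X : Ω → A) (Y : Ω → B) : ℝ :=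
  ∑ a : A, ∑ b : B,
    (∑ ω ∈ Finset.univ.filter (fun ω => X ω = a ∧ Y ω = b), P ω) *
      Real.log
        ((∑ ω ∈ Finset.univ.filter (fun ω => X ω = a ∧ Y ω = b), P ω) /
          ((∑ ω ∈ Finset.univ.filter (fun ω => X ω = a), P ω) *
            (∑ ω ∈ Finset.univ.filter (fun ω => Y ω = b), P ω)))

lemma sum_joint {Ω A B : Type*} [Fintype Ω] [Fintype A] [Fintype B]
    [DecidableEq A] [DecidableEq B] (P : Ω → ℝ) (X : Ω → A) (Y : Ω → B) (f : A → B → ℝ) :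
    ∑ a : A, ∑ b : B, (∑ ω ∈ Finset.univ.filter (fun ω => X ω = a ∧ Y ω = b), P ω) * f a b
      = ∑ ω, P ω * f (X ω) (Y ω) := by
  simp_rw [Finset.sum_mul, Finset.sum_filter]
  have h : ∀ a : A, ∑ b : B, ∑ ω, (if X ω = a ∧ Y ω = b then P ω * f a b else 0)
      = ∑ ω, (if X ω = a then P ω * f a (Y ω) else 0) := by
    intro a
    rw [Finset.sum_comm]
    refine Finset.sum_congr rfl fun ω _ => ?_
    by_cases hx : X ω = a <;> simp [hx]
  simp_rw [h]
  rw [Finset.sum_comm]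
  simp

lemma sum_marg {Ω A : Type*} [Fintype Ω] [Fintype A]
    [DecidableEq A] (P : Ω → ℝ) (X : Ω → A) (f : A → ℝ) :
    ∑ ω, P ω * f (X ω) =
    ∑ a : A, (∑ ω ∈ Finset.univ.filter (fun ω => X ω = a), P ω) * f a := by
  simp_rw [Finset.sum_mul, Finset.sum_filter]
  rw [Finset.sum_comm]
  simp

lemma mutualInfo_le {Ω A B : Type*} [Fintype Ω] [Fintype A] [Fintype B]
    [DecidableEq A] [DecidableEq B] [Nonempty A] (P : Ω → ℝ) (hP : ∀ ω, 0 ≤ P ω)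
    (h1 : ∑ ω, P ω = 1) (X : Ω → A) (Y : Ω → B) :
    mutualInfo P X Y ≤ (∑ ω, P ω *
      ((∑ ω' ∈ Finset.univ.filter (fun ω' => X ω' = X ω ∧ Y ω' = Y ω), P ω') *
        (Fintype.card A : ℝ) /
        (∑ ω' ∈ Finset.univ.filter (fun ω' => Y ω' = Y ω), P ω'))) - 1 := by
  set p : A → B → ℝ := fun a b => ∑ ω ∈ Finset.univ.filter (fun ω => X ω = a ∧ Y ω = b), P ω with hp
  set r : A → ℝ := fun a => ∑ ω ∈ Finset.univ.filter (fun ω => X ω = a), P ω with hr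
  set q : B → ℝ := fun b => ∑ ω ∈ Finset.univ.filter (fun ω => Y ω = b), P ω with hq
  set M : ℝ := (Fintype.card A : ℝ) with hM
  have hM0 : 0 < M := by rw [hM]; exact_mod_cast Fintype.card_pos
  have hpr : ∀ a b, p a b ≤ r a := fun a b =>
    Finset.sum_le_sum_of_subset_of_nonneg
      (by intro ω; simp +contextual) (fun ω _ _ => hP ω)
  have hpq : ∀ a b, p a b ≤ q b := fun a b =>
    Finset.sum_le_sum_of_subset_of_nonneg
      (by intro ω; simp +contextual) (fun ω _ _ => hP ω)
  have hp0 : ∀ a b, 0 ≤ p a b := fun a b => Finset.sum_nonneg fun ω _ => hP ω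
  have hr0 : ∀ a, 0 ≤ r a := fun a => Finset.sum_nonneg fun ω _ => hP ω
  have key : ∀ a b, p a b * Real.log (p a b / (r a * q b)) ≤
      p a b * ((p a b * M / q b - 1) + ((M * r a)⁻¹ - 1)) := by
    intro a b
    rcases (hp0 a b).eq_or_lt with h | h
    · rw [← h]; simp
    · have h2 := h.trans_le (hpr a b)
      have h3 := h.trans_le (hpq a b)
      refine mul_le_mul_of_nonneg_left ?_ h.le
      have e : p a b / (r a * q b) = (p a b * M / q b) * (M * r a)⁻¹ := by field_simp
      rw [e, Real.log_mul (by positivity) (by positivity)]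
      exact add_le_add (Real.log_le_sub_one_of_pos (by positivity))
        (Real.log_le_sub_one_of_pos (by positivity))
  have step : mutualInfo P X Y ≤
      ∑ a, ∑ b, p a b * ((p a b * M / q b - 1) + ((M * r a)⁻¹ - 1)) :=
    Finset.sum_le_sum fun a _ => Finset.sum_le_sum fun b _ => key a b
  refine step.trans ?_
  have e := sum_joint P X Y (fun a b => (p a b * M / q b - 1) + ((M * r a)⁻¹ - 1))
  have e2 := sum_marg P X (fun a => (M * r a)⁻¹)
  have e3 : ∑ ω, P ω * (M * r (X ω))⁻¹ ≤ 1 := by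
    rw [e2]
    calc ∑ a, r a * (M * r a)⁻¹ ≤ ∑ a : A, M⁻¹ := by
          refine Finset.sum_le_sum fun a _ => ?_
          rcases (hr0 a).eq_or_lt with h | h
          · rw [← h]; simp; exact hM0.le
          · apply le_of_eq; field_simp
      _ = 1 := by simp [← hM, hM0.ne']
  change ∑ a, ∑ b, p a b * _ = _ at e
  rw [e]
  have e4 : ∑ ω, P ω * ((p (X ω) (Y ω) * M / q (Y ω) - 1) + ((M * r (X ω))⁻¹ - 1))
      = ∑ ω, P ω * (p (X ω) (Y ω) * M / q (Y ω)) - 1 + (∑ ω, P ω * (M * r (X ω))⁻¹ - 1) := by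
    have h2 : ∀ u v : ℝ, u - 1 + (v - 1) = u - ∑ ω, P ω + (v - ∑ ω, P ω) := by
      intro u v; rw [h1]
    rw [h2 (∑ ω, P ω * (p (X ω) (Y ω) * M / q (Y ω))), ← Finset.sum_sub_distrib,
      ← Finset.sum_sub_distrib, ← Finset.sum_add_distrib]
    exact Finset.sum_congr rfl fun ω _ => by ring
  rw [e4]
  linarith

lemma card_fiber (n : ℕ) (S : Finset (Fin n)) (x : Fin n → ZMod 2) :
    (Finset.univ.filter (fun y : Fin n → ZMod 2 =>
      (fun i : {i // i ∈ S} => y i) = (fun i : {i // i ∈ S} => x i))).card = 2 ^ (n - S.card) := by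
  classical
  have : (Finset.univ.filter (fun y : Fin n → ZMod 2 =>
      (fun i : {i // i ∈ S} => y i) = (fun i : {i // i ∈ S} => x i)))
      = Fintype.piFinset (fun i => if i ∈ S then {x i} else Finset.univ) := by
    ext y
    simp only [Finset.mem_filter, Finset.mem_univ, true_and, Fintype.mem_piFinset, funext_iff,
      Subtype.forall]
    refine forall_congr' fun i => ?_
    by_cases h : i ∈ S <;> simp [h]
  rw [this, Fintype.card_piFinset]
  have : ∀ i, (if i ∈ S then {x i} else (Finset.univ : Finset (ZMod 2))).card
      = if i ∈ S then 1 else 2 := by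
    intro i; split_ifs <;> simp [ZMod.card]
  simp_rw [this]
  rw [Finset.prod_ite]
  simp [Finset.filter_not, Finset.card_sdiff]

/-- Paper's equation (12): with a `2^{−m}`-almost-universal₂ family (e.g. Toeplitz hashing)
and `s = n − t − m`, the attacker's information about the authentication key is at most
`2^{−s}` nats. -/
theorem stmt_6 (n m t : ℕ) (hmt : m + t ≤ n) (S : Finset (Fin n)) (hS : S.card = t)
    (𝓖 : Finset ((Fin n → ZMod 2) → (Fin m → ZMod 2))) (h𝓖 : 𝓖.Nonempty)
    (hAU : AlmostUniversal₂ (((2 : ℝ) ^ m)⁻¹) 𝓖) :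
    mutualInfo
      (fun _ : (Fin n → ZMod 2) × {g // g ∈ 𝓖} =>
        (Fintype.card ((Fin n → ZMod 2) × {g // g ∈ 𝓖}) : ℝ)⁻¹)
      (fun ω => (ω.2 : (Fin n → ZMod 2) → (Fin m → ZMod 2)) ω.1)
      (fun ω => ((fun i : {i // i ∈ S} => ω.1 i), ω.2))
      ≤ (2 : ℝ) ^ (-((n - t - m : ℕ) : ℤ)) := by
  classical
  subst hS
  set L : ℝ := (2:ℝ) ^ (n - S.card) with hL
  set G : ℝ := (𝓖.card : ℝ) with hG
  have hG0 : 0 < G := by rw [hG]; exact_mod_cast h𝓖.card_pos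
  have hL0 : 0 < L := by positivity
  have hcard : (Fintype.card ((Fin n → ZMod 2) × {g // g ∈ 𝓖}) : ℝ) = 2 ^ n * G := by
    simp [ZMod.card, hG]
  rw [hcard]
  set c : ℝ := (2 ^ n * G)⁻¹ with hc
  have hc0 : 0 < c := by positivity
  refine (mutualInfo_le _ (fun _ => hc0.le) ?_ _ _).trans ?_
  · rw [Finset.sum_const, nsmul_eq_mul, Finset.card_univ, hcard, hc]
    exact mul_inv_cancel₀ (by positivity)
  have hM : (Fintype.card (Fin m → ZMod 2) : ℝ) = 2 ^ m := by simp [ZMod.card]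
  rw [hM]
  set N : (Fin n → ZMod 2) → {g // g ∈ 𝓖} → Finset (Fin n → ZMod 2) := fun x g =>
    Finset.univ.filter (fun y : Fin n → ZMod 2 =>
      (fun i : {i // i ∈ S} => y i) = (fun i : {i // i ∈ S} => x i) ∧ g.1 y = g.1 x) with hN
  set F : (Fin n → ZMod 2) → Finset (Fin n → ZMod 2) := fun x =>
    Finset.univ.filter (fun y : Fin n → ZMod 2 =>
      (fun i : {i // i ∈ S} => y i) = (fun i : {i // i ∈ S} => x i)) with hF
  have hFc : ∀ x, ((F x).card : ℝ) = L := fun x => by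
    rw [hF]; simp only; rw [card_fiber]; simp [hL]
  have hq : ∀ ω : (Fin n → ZMod 2) × {g // g ∈ 𝓖},
      (Finset.univ.filter (fun ω' : (Fin n → ZMod 2) × {g // g ∈ 𝓖} =>
        ((fun i : {i // i ∈ S} => ω'.1 i), ω'.2) = ((fun i : {i // i ∈ S} => ω.1 i), ω.2)))
      = F ω.1 ×ˢ {ω.2} := by
    intro ω; ext ω'
    simp only [hF, Finset.mem_filter, Finset.mem_univ, true_and, Finset.mem_product,
      Finset.mem_singleton, Prod.mk.injEq]
  have hp : ∀ ω : (Fin n → ZMod 2) × {g // g ∈ 𝓖},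
      (Finset.univ.filter (fun ω' : (Fin n → ZMod 2) × {g // g ∈ 𝓖} =>
        (ω'.2 : (Fin n → ZMod 2) → (Fin m → ZMod 2)) ω'.1 = ω.2.1 ω.1 ∧
        ((fun i : {i // i ∈ S} => ω'.1 i), ω'.2) = ((fun i : {i // i ∈ S} => ω.1 i), ω.2)))
      = N ω.1 ω.2 ×ˢ {ω.2} := by
    intro ω; ext ⟨y, g⟩
    simp only [hN, Finset.mem_filter, Finset.mem_univ, true_and, Finset.mem_product,
      Finset.mem_singleton, Prod.mk.injEq]
    constructor
    · rintro ⟨h1, h2, rfl⟩; exact ⟨⟨h2, h1⟩, rfl⟩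
    · rintro ⟨⟨h2, h1⟩, rfl⟩; exact ⟨h1, h2, rfl⟩
  have hterm : ∀ x, ∑ g, ((N x g).card : ℝ) ≤ G * (1 + (L - 1) * ((2:ℝ) ^ m)⁻¹) := by
    intro x
    have h1 : ∑ g, ((N x g).card : ℝ)
        = ∑ y ∈ F x, ((𝓖.filter fun g => g y = g x).card : ℝ) := by
      have a1 : ∀ g : {g // g ∈ 𝓖}, ((N x g).card : ℝ) = ∑ y ∈ F x, if g.1 y = g.1 x then 1 else 0 := by
        intro g
        rw [Finset.sum_boole, hN, hF, Finset.filter_filter]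
      simp_rw [a1]
      rw [Finset.sum_comm]
      refine Finset.sum_congr rfl fun y _ => ?_
      rw [← Finset.sum_boole]
      exact Finset.sum_coe_sort 𝓖 (fun g => if g y = g x then (1:ℝ) else 0)
    have hx : x ∈ F x := by simp [hF]
    rw [h1, ← Finset.add_sum_erase _ _ hx]
    have h2 : ∑ y ∈ (F x).erase x, ((𝓖.filter fun g => g y = g x).card : ℝ)
        ≤ ∑ y ∈ (F x).erase x, ((2:ℝ) ^ m)⁻¹ * G := by
      refine Finset.sum_le_sum fun y hy => ?_
      exact (div_le_iff₀ hG0).1 (hAU y x (Finset.ne_of_mem_erase hy))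
    rw [Finset.sum_const, nsmul_eq_mul, Finset.cast_card_erase_of_mem hx, hFc] at h2
    have h3 : ((𝓖.filter fun g => g x = g x).card : ℝ) = G := by simp [hG]
    rw [h3]
    linarith
  have hz : (2:ℝ) ^ (-((n - S.card - m : ℕ) : ℤ)) = 2 ^ m / L := by
    rw [zpow_neg, zpow_natCast, hL, inv_eq_one_div, div_eq_div_iff (by positivity) (by positivity),
      one_mul, ← pow_add]
    congr 1; omega
  rw [hz]
  simp only [hp, hq, Finset.sum_const, Finset.card_product, Finset.card_singleton, mul_one,
    nsmul_eq_mul, hFc]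
  rw [Fintype.sum_prod_type]
  have h5 : ∀ (x : Fin n → ZMod 2) (g : {g // g ∈ 𝓖}),
      c * (((N x g).card : ℝ) * c * 2 ^ m / (L * c)) = (c * 2 ^ m / L) * ((N x g).card : ℝ) := by
    intro x g; field_simp
  simp only [h5, ← Finset.mul_sum]
  have h6 := Finset.sum_le_sum fun x (_ : x ∈ (Finset.univ : Finset (Fin n → ZMod 2))) => hterm x
  rw [Finset.sum_const, nsmul_eq_mul, Finset.card_univ] at h6
  have h7 : (Fintype.card (Fin n → ZMod 2) : ℝ) = 2 ^ n := by simp [ZMod.card]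
  rw [h7] at h6
  have h8 := mul_le_mul_of_nonneg_left h6 (show 0 ≤ c * 2 ^ m / L by positivity)
  have h9 : c * 2 ^ m / L * (2 ^ n * (G * (1 + (L - 1) * ((2:ℝ) ^ m)⁻¹)))
      = 2 ^ m / L + 1 - 1 / L := by
    rw [hc]; field_simp; ring
  rw [h9] at h8
  have : 0 < 1 / L := by positivity
  linarith
end

section
/- Let n, n', m, c be natural numbers with c ≤ n, let O ⊆ Fin n with |O| = c, let ε ≥ 0, and let 𝓖_A be a nonempty finite ε-almost-universal₂ family of functions from (Fin n → ZMod 2) to (Fin m → ZMod 2). Let X be uniform on (Fin n → ZMod 2), W uniform on (Fin n' → ZMod 2), G_A uniform on 𝓖_A, and G_B uniform on a nonempty finite set 𝓗, with X, W, G_A, G_B jointly independent (the product of uniform measures). Let Φ be any function taking as input the restriction of X to O together with W and G_B, with values in a finite type. Then the mutual information (in nats) satisfies I[ G_A(X) : (Φ(X|_O, W, G_B), G_A, G_B) ] ≤ ln( 2^{m+c}/2^n + 2^m · ε ). -/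
/-- Decidable equality for the value type of the eavesdropper's view (helper instance). -/
instance decEqView (n m : ℕ) (𝓖A : Finset ((Fin n → ZMod 2) → (Fin m → ZMod 2)))
    {𝓗 F : Type*} [DecidableEq 𝓗] [DecidableEq F] :
    DecidableEq (F × {g // g ∈ 𝓖A} × 𝓗) := instDecidableEqProd

open Finset in
theorem mi_abs {A B V : Type*} [Fintype A] [Fintype B] [Fintype V]
    [DecidableEq B] (f : V → B) (q : A → V → ℝ) (r : V → ℝ)
    (hq : ∀ a v, 0 ≤ q a v) (hr : ∀ v, 0 < r v) (hqr : ∀ v, ∑ a, q a v = r v)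
    (hr1 : ∑ v, r v = 1) (C : ℝ) (hC : 0 < C)
    (hbound : (Fintype.card A : ℝ) * ∑ v, ∑ a, q a v ^ 2 / r v ≤ C) :
    ∑ a, ∑ b, (∑ v ∈ univ.filter (fun v => f v = b), q a v) *
      Real.log ((∑ v ∈ univ.filter (fun v => f v = b), q a v) /
        ((∑ v, q a v) * (∑ v ∈ univ.filter (fun v => f v = b), r v))) ≤ Real.log C := by
  classical
  set Q : A → B → ℝ := fun a b => ∑ v ∈ univ.filter (fun v => f v = b), q a v with hQ
  set R : B → ℝ := fun b => ∑ v ∈ univ.filter (fun v => f v = b), r v with hR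
  set P : A → ℝ := fun a => ∑ v, q a v with hP
  have hQ0 : ∀ a b, 0 ≤ Q a b := fun a b => sum_nonneg fun v _ => hq a v
  have hP0 : ∀ a, 0 ≤ P a := fun a => sum_nonneg fun v _ => hq a v
  have hQP : ∀ a, ∑ b, Q a b = P a := fun a => sum_fiberwise univ f (q a)
  have hP1 : ∑ a, P a = 1 := by
    rw [hP, sum_comm]; simp only [hqr, hr1]
  have hAne : Nonempty A := by
    by_contra h
    rw [not_nonempty_iff] at h
    simp at hP1
  have hA : (0 : ℝ) < Fintype.card A := by exact_mod_cast Fintype.card_pos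
  set α : ℝ := ((Fintype.card A : ℕ) : ℝ) with hα
  have key : ∀ a b, Q a b * Real.log (Q a b / (P a * R b)) ≤
      α / C * (Q a b ^ 2 / R b) + (Real.log C - 2) * Q a b + α⁻¹ * (Q a b / P a) := by
    intro a b
    rcases (hQ0 a b).eq_or_lt with h | h
    · rw [← h]; simp
    have hPp : 0 < P a := by
      rw [← hQP a]
      exact lt_of_lt_of_le h (single_le_sum (f := Q a) (fun b _ => hQ0 a b) (mem_univ b))
    have hRp : 0 < R b := by
      refine lt_of_lt_of_le h (sum_le_sum fun v _ => ?_)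
      rw [← hqr v]
      exact single_le_sum (f := fun a => q a v) (fun a _ => hq a v) (mem_univ a)
    have e : Q a b / (P a * R b) = (α * Q a b / (R b * C)) * C * (1 / (α * P a)) := by
      field_simp
    have l1 := Real.log_le_sub_one_of_pos (show 0 < α * Q a b / (R b * C) by positivity)
    have l2 := Real.log_le_sub_one_of_pos (show 0 < 1 / (α * P a) by positivity)
    have : Real.log (Q a b / (P a * R b)) ≤
        α * Q a b / (R b * C) - 1 + Real.log C + (1 / (α * P a) - 1) := by
      rw [e, Real.log_mul (by positivity) (by positivity),
        Real.log_mul (by positivity) (by positivity)]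
      linarith
    refine (mul_le_mul_of_nonneg_left this h.le).trans (le_of_eq ?_)
    field_simp
    ring
  have s1 : ∑ a, ∑ b, Q a b = 1 := by simp only [hQP, hP1]
  have s2 : ∑ a, ∑ b, Q a b / P a ≤ α := by
    calc ∑ a, ∑ b, Q a b / P a ≤ ∑ a : A, (1 : ℝ) := by
          refine sum_le_sum fun a _ => ?_
          rw [← sum_div, hQP]
          exact div_self_le_one _
      _ = α := by simp [hα]
  have s3 : ∑ a, ∑ b, Q a b ^ 2 / R b ≤ ∑ v, ∑ a, q a v ^ 2 / r v := by
    rw [sum_comm (s := (univ : Finset V))]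
    refine sum_le_sum fun a _ => ?_
    rw [← sum_fiberwise univ f (fun v => q a v ^ 2 / r v)]
    refine sum_le_sum fun b _ => ?_
    exact sq_sum_div_le_sum_sq_div _ _ (fun v _ => hr v)
  calc _ ≤ ∑ a, ∑ b, (α / C * (Q a b ^ 2 / R b) + (Real.log C - 2) * Q a b
            + α⁻¹ * (Q a b / P a)) :=
        sum_le_sum fun a _ => sum_le_sum fun b _ => key a b
    _ = α / C * (∑ a, ∑ b, Q a b ^ 2 / R b) + (Real.log C - 2) * (∑ a, ∑ b, Q a b)
          + α⁻¹ * ∑ a, ∑ b, Q a b / P a := by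
        simp only [sum_add_distrib, mul_sum]
    _ ≤ 1 + (Real.log C - 2) * 1 + 1 := by
        rw [s1]
        have t1 : α / C * (∑ a, ∑ b, Q a b ^ 2 / R b) ≤ 1 := by
          rw [div_mul_eq_mul_div, div_le_one hC]
          exact (mul_le_mul_of_nonneg_left s3 hA.le).trans hbound
        have t2 : α⁻¹ * ∑ a, ∑ b, Q a b / P a ≤ 1 := by
          rw [inv_mul_le_iff₀ hA]; linarith
        linarith
    _ = Real.log C := by ring

open Finset in
theorem mi_gen {Ω A B V : Type*} [Fintype Ω] [Fintype A] [Fintype B] [Fintype V]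
    [DecidableEq A] [DecidableEq B] [DecidableEq V] (p : Ω → ℝ) (X : Ω → A) (Y : Ω → V)
    (f : V → B) (hp : ∀ ω, 0 ≤ p ω) (hp1 : ∑ ω, p ω = 1)
    (hr : ∀ v, 0 < ∑ ω ∈ univ.filter (fun ω => Y ω = v), p ω) (C : ℝ) (hC : 0 < C)
    (hbound : (Fintype.card A : ℝ) * ∑ v, ∑ a,
      (∑ ω ∈ univ.filter (fun ω => X ω = a ∧ Y ω = v), p ω) ^ 2 /
        (∑ ω ∈ univ.filter (fun ω => Y ω = v), p ω) ≤ C) :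
    mutualInfo p X (fun ω => f (Y ω)) ≤ Real.log C := by
  have h := mi_abs f (fun a v => ∑ ω ∈ univ.filter (fun ω => X ω = a ∧ Y ω = v), p ω)
    (fun v => ∑ ω ∈ univ.filter (fun ω => Y ω = v), p ω)
    (fun a v => sum_nonneg fun ω _ => hp ω) hr
    (fun v => by
      rw [← sum_fiberwise (univ.filter (fun ω => Y ω = v)) X p]
      refine sum_congr rfl fun a _ => ?_
      rw [filter_filter]; simp only [and_comm])
    (by rw [sum_fiberwise univ Y p, hp1]) C hC hbound
  refine le_of_eq_of_le ?_ h
  unfold mutualInfo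
  have e1 : ∀ a b, ∑ ω ∈ univ.filter (fun ω => X ω = a ∧ f (Y ω) = b), p ω
      = ∑ v ∈ univ.filter (fun v => f v = b),
        ∑ ω ∈ univ.filter (fun ω => X ω = a ∧ Y ω = v), p ω := by
    intro a b
    rw [← sum_fiberwise (univ.filter (fun ω => X ω = a ∧ f (Y ω) = b)) Y p,
      sum_filter (fun v => f v = b)]
    refine sum_congr rfl fun v _ => ?_
    rw [filter_filter]
    split_ifs with h
    · congr 1; ext ω; simp only [mem_filter, mem_univ, true_and]; grind
    · refine sum_eq_zero fun ω hω => ?_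
      simp only [mem_filter, mem_univ, true_and] at hω; grind
  have e2 : ∀ b, ∑ ω ∈ univ.filter (fun ω => f (Y ω) = b), p ω
      = ∑ v ∈ univ.filter (fun v => f v = b),
        ∑ ω ∈ univ.filter (fun ω => Y ω = v), p ω := by
    intro b
    rw [← sum_fiberwise (univ.filter (fun ω => f (Y ω) = b)) Y p,
      sum_filter (fun v => f v = b)]
    refine sum_congr rfl fun v _ => ?_
    rw [filter_filter]
    split_ifs with h
    · congr 1; ext ω; simp only [mem_filter, mem_univ, true_and]; grind
    · refine sum_eq_zero fun ω hω => ?_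
      simp only [mem_filter, mem_univ, true_and] at hω; grind
  have e3 : ∀ a, ∑ ω ∈ univ.filter (fun ω => X ω = a), p ω
      = ∑ v, ∑ ω ∈ univ.filter (fun ω => X ω = a ∧ Y ω = v), p ω := by
    intro a
    rw [← sum_fiberwise (univ.filter (fun ω => X ω = a)) Y p]
    refine sum_congr rfl fun v _ => ?_
    rw [filter_filter]
  simp only [e1, e2, e3]

open Finset in
theorem fiber_card (n : ℕ) (O : Finset (Fin n)) (s : {i // i ∈ O} → ZMod 2) :
    ((univ.filter (fun x : Fin n → ZMod 2 => (fun i : {i // i ∈ O} => x i) = s)).card : ℝ)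
      = 2 ^ (n - O.card) := by
  have : (univ.filter (fun x : Fin n → ZMod 2 => (fun i : {i // i ∈ O} => x i) = s)).card
      = Fintype.card ({i // ¬ i ∈ O} → ZMod 2) := by
    rw [← Fintype.card_subtype]
    refine Fintype.card_congr ?_
    refine ((Equiv.piEquivPiSubtypeProd (fun i => i ∈ O) (fun _ => ZMod 2)).subtypeEquiv
      (q := fun y => y.1 = s) (fun x => Iff.rfl)).trans ?_
    exact
      { toFun := fun y => y.1.2
        invFun := fun t => ⟨(s, t), rfl⟩
        left_inv := by rintro ⟨⟨a, b⟩, rfl⟩; rfl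
        right_inv := fun t => rfl }
  rw [this]
  simp [Fintype.card_subtype_compl]

open Finset in
/-- counting bound on the collisions -/
theorem coll_bound (n m : ℕ) (O : Finset (Fin n)) (ε : ℝ) (hε : 0 ≤ ε)
    (𝓖A : Finset ((Fin n → ZMod 2) → (Fin m → ZMod 2))) (h𝓖A : 𝓖A.Nonempty)
    (hAU : AlmostUniversal₂ ε 𝓖A) :
    ∑ s : {i // i ∈ O} → ZMod 2, ∑ g : {g // g ∈ 𝓖A}, ∑ a : Fin m → ZMod 2,
      ((univ.filter (fun x : Fin n → ZMod 2 =>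
        g.1 x = a ∧ (fun i : {i // i ∈ O} => x i) = s)).card : ℝ) ^ 2
      ≤ 2 ^ n * 𝓖A.card * (1 + 2 ^ (n - O.card) * ε) := by
  have hG : (0 : ℝ) < 𝓖A.card := by exact_mod_cast h𝓖A.card_pos
  let ρ : (Fin n → ZMod 2) → ({i // i ∈ O} → ZMod 2) := fun x i => x i
  have step : ∀ (s : {i // i ∈ O} → ZMod 2) (g : {g // g ∈ 𝓖A}),
      ∑ a : Fin m → ZMod 2, ((univ.filter (fun x : Fin n → ZMod 2 =>
        g.1 x = a ∧ (fun i : {i // i ∈ O} => x i) = s)).card : ℝ) ^ 2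
      = ∑ x : Fin n → ZMod 2, ∑ x' : Fin n → ZMod 2,
        if ρ x = s then (if ρ x' = ρ x then (if g.1 x = g.1 x' then (1:ℝ) else 0) else 0)
          else 0 := by
    intro s g
    have : ∀ a : Fin m → ZMod 2, ((univ.filter (fun x : Fin n → ZMod 2 =>
        g.1 x = a ∧ (fun i : {i // i ∈ O} => x i) = s)).card : ℝ) ^ 2 =
        ∑ x : Fin n → ZMod 2, ∑ x' : Fin n → ZMod 2,
          (if a = g.1 x then (if g.1 x' = a ∧ ρ x = s ∧ ρ x' = s then (1:ℝ) else 0) else 0) := by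
      intro a
      rw [sq, card_filter]
      push_cast
      rw [sum_mul_sum]
      refine sum_congr rfl fun x _ => sum_congr rfl fun x' _ => ?_
      change (if g.1 x = a ∧ ρ x = s then (1:ℝ) else 0) *
        (if g.1 x' = a ∧ ρ x' = s then (1:ℝ) else 0) = _
      simp only [eq_comm (a := a) (b := g.1 x)]
      by_cases h1 : g.1 x = a <;> by_cases h2 : ρ x = s <;> by_cases h3 : g.1 x' = a <;>
        by_cases h4 : ρ x' = s <;> simp [h1, h2, h3, h4]
    simp only [this]
    rw [sum_comm]
    refine sum_congr rfl fun x _ => ?_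
    rw [sum_comm]
    refine sum_congr rfl fun x' _ => ?_
    rw [sum_ite_eq' univ]
    by_cases h1 : g.1 x = g.1 x' <;> by_cases h2 : ρ x = s
    · subst h2; simp [h1]
    · simp [h2]
    · simp [h1, Ne.symm h1]
    · simp [h2]
  simp only [step]
  have bd : ∀ x x' : Fin n → ZMod 2,
      ∑ g : {g // g ∈ 𝓖A}, (if g.1 x = g.1 x' then (1:ℝ) else 0)
        ≤ 𝓖A.card * ((if x = x' then 1 else 0) + ε) := by
    intro x x'
    rw [sum_coe_sort 𝓖A (fun g => if g x = g x' then (1:ℝ) else 0)]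
    rw [← sum_filter, sum_const, nsmul_eq_mul, mul_one]
    by_cases h : x = x'
    · have := card_filter_le 𝓖A (fun g => g x = g x')
      have : ((𝓖A.filter fun g => g x = g x').card : ℝ) ≤ 𝓖A.card := by exact_mod_cast this
      simp only [h, if_true] at this ⊢
      nlinarith
    · have := hAU x x' h
      rw [div_le_iff₀ hG] at this
      simp only [h, if_false]
      linarith
  calc _ = ∑ x : Fin n → ZMod 2, ∑ x' : Fin n → ZMod 2,
        if ρ x' = ρ x then ∑ g : {g // g ∈ 𝓖A}, (if g.1 x = g.1 x' then (1:ℝ) else 0) else 0 := by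
        rw [sum_comm]
        simp_rw [sum_comm (s := (univ : Finset ({i // i ∈ O} → ZMod 2)))]
        rw [sum_comm]
        refine sum_congr rfl fun x _ => ?_
        rw [sum_comm]
        refine sum_congr rfl fun x' _ => ?_
        simp only [sum_ite_eq, mem_univ, if_true]
        split_ifs <;> simp
    _ ≤ ∑ x : Fin n → ZMod 2, ∑ x' : Fin n → ZMod 2,
        if ρ x' = ρ x then 𝓖A.card * ((if x = x' then 1 else 0) + ε) else 0 := by
        refine sum_le_sum fun x _ => sum_le_sum fun x' _ => ?_
        split_ifs with h1 h2
        · simpa [h2] using bd x x'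
        · simpa [h2] using bd x x'
        · exact le_rfl
    _ = ∑ x : Fin n → ZMod 2, 𝓖A.card * (1 + 2 ^ (n - O.card) * ε) := by
        refine sum_congr rfl fun x _ => ?_
        rw [← fiber_card n O (ρ x), card_filter]
        push_cast
        change _ = (𝓖A.card : ℝ) * (1 + (∑ x' : Fin n → ZMod 2, if ρ x' = ρ x then (1:ℝ) else 0) * ε)
        have h1 : (𝓖A.card : ℝ) * (1 + (∑ x' : Fin n → ZMod 2, if ρ x' = ρ x then (1:ℝ) else 0) * ε)
            = 𝓖A.card * ((∑ x' : Fin n → ZMod 2, if x = x' then (1:ℝ) else 0) +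
              (∑ x' : Fin n → ZMod 2, if ρ x' = ρ x then (1:ℝ) else 0) * ε) := by
          rw [sum_ite_eq]; simp
        rw [h1, sum_mul, ← sum_add_distrib, mul_sum]
        refine sum_congr rfl fun x' _ => ?_
        by_cases h : x = x'
        · subst h; simp
        · simp [h]
    _ = _ := by
        rw [sum_const, nsmul_eq_mul, ← mul_assoc]
        simp [ZMod.card]

set_option maxHeartbeats 400000 in
/-- Non-repudiation bound (paper's equations (14)/(16)): with `X` uniform on `n`-bit
strings, `W` uniform on `n'`-bit strings, `G_A` uniform on an `ε`-almost-universal₂ family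
`𝓖A`, `G_B` uniform on a nonempty finite set `𝓗`, all jointly independent (uniform on the
product space), and `Φ` any function of `(X|_O, W, G_B)`, the mutual information between
`K_au^A = G_A(X)` and `(Φ(X|_O, W, G_B), G_A, G_B)` is at most `ln(2^{m+c}/2^n + 2^m·ε)`. -/
theorem stmt_7 (n n' m c : ℕ) (hc : c ≤ n) (O : Finset (Fin n)) (hO : O.card = c)
    (ε : ℝ) (hε : 0 ≤ ε)
    (𝓖A : Finset ((Fin n → ZMod 2) → (Fin m → ZMod 2))) (h𝓖A : 𝓖A.Nonempty)
    (hAU : AlmostUniversal₂ ε 𝓖A)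
    {𝓗 F : Type*} [Fintype 𝓗] [Nonempty 𝓗] [DecidableEq 𝓗] [Fintype F] [DecidableEq F]
    (Φ : ({i // i ∈ O} → ZMod 2) → (Fin n' → ZMod 2) → 𝓗 → F) :
    mutualInfo
      (fun _ : (Fin n → ZMod 2) × (Fin n' → ZMod 2) × {g // g ∈ 𝓖A} × 𝓗 =>
        (Fintype.card ((Fin n → ZMod 2) × (Fin n' → ZMod 2) × {g // g ∈ 𝓖A} × 𝓗) : ℝ)⁻¹)
      (fun ω => (ω.2.2.1 : (Fin n → ZMod 2) → (Fin m → ZMod 2)) ω.1)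
      (fun ω => (Φ (fun i : {i // i ∈ O} => ω.1 i) ω.2.1 ω.2.2.2, ω.2.2.1, ω.2.2.2))
      ≤ Real.log ((2 : ℝ) ^ (m + c) / (2 : ℝ) ^ n + (2 : ℝ) ^ m * ε) := by
  classical
  subst hO
  have hG : (0 : ℝ) < 𝓖A.card := by exact_mod_cast h𝓖A.card_pos
  have hH : (0 : ℝ) < Fintype.card 𝓗 := by exact_mod_cast Fintype.card_pos
  have hcardN : (Fintype.card ((Fin n → ZMod 2) × (Fin n' → ZMod 2) × {g // g ∈ 𝓖A} × 𝓗) : ℝ)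
      = 2 ^ n * (2 ^ n' * (𝓖A.card * Fintype.card 𝓗)) := by
    simp [ZMod.card]
  rw [hcardN]
  set N : ℝ := 2 ^ n * (2 ^ n' * (𝓖A.card * Fintype.card 𝓗)) with hN
  have hNp : 0 < N := by positivity
  have c1 : ∀ (s : {i // i ∈ O} → ZMod 2) (w : Fin n' → ZMod 2) (g : {g // g ∈ 𝓖A}) (h : 𝓗)
      (a : Fin m → ZMod 2),
      Finset.univ.filter (fun ω : (Fin n → ZMod 2) × (Fin n' → ZMod 2) × {g // g ∈ 𝓖A} × 𝓗 =>
        ω.2.2.1.1 ω.1 = a ∧ ((fun i : {i // i ∈ O} => ω.1 i), ω.2.1, ω.2.2.1, ω.2.2.2)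
          = (s, w, g, h))
      = (Finset.univ.filter (fun x : Fin n → ZMod 2 =>
        g.1 x = a ∧ (fun i : {i // i ∈ O} => x i) = s)) ×ˢ {(w, g, h)} := by
    intro s w g h a
    ext ⟨x, w', g', h'⟩
    simp only [Finset.mem_filter, Finset.mem_univ, true_and, Finset.mem_product,
      Finset.mem_singleton, Prod.mk.injEq]
    constructor
    · rintro ⟨h1, h2, rfl, rfl, rfl⟩; exact ⟨⟨h1, h2⟩, rfl, rfl, rfl⟩
    · rintro ⟨⟨h1, h2⟩, rfl, rfl, rfl⟩; exact ⟨h1, h2, rfl, rfl, rfl⟩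
  have c2 : ∀ (s : {i // i ∈ O} → ZMod 2) (w : Fin n' → ZMod 2) (g : {g // g ∈ 𝓖A}) (h : 𝓗),
      Finset.univ.filter (fun ω : (Fin n → ZMod 2) × (Fin n' → ZMod 2) × {g // g ∈ 𝓖A} × 𝓗 =>
        ((fun i : {i // i ∈ O} => ω.1 i), ω.2.1, ω.2.2.1, ω.2.2.2) = (s, w, g, h))
      = (Finset.univ.filter (fun x : Fin n → ZMod 2 =>
        (fun i : {i // i ∈ O} => x i) = s)) ×ˢ {(w, g, h)} := by
    intro s w g h
    ext ⟨x, w', g', h'⟩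
    simp only [Finset.mem_filter, Finset.mem_univ, true_and, Finset.mem_product,
      Finset.mem_singleton, Prod.mk.injEq]
  have hrv : ∀ v : ({i // i ∈ O} → ZMod 2) × (Fin n' → ZMod 2) × {g // g ∈ 𝓖A} × 𝓗,
      ∑ ω ∈ Finset.univ.filter
        (fun ω : (Fin n → ZMod 2) × (Fin n' → ZMod 2) × {g // g ∈ 𝓖A} × 𝓗 =>
        ((fun i : {i // i ∈ O} => ω.1 i), ω.2.1, ω.2.2.1, ω.2.2.2) = v), N⁻¹
      = 2 ^ (n - O.card) * N⁻¹ := by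
    rintro ⟨s, w, g, h⟩
    rw [c2, Finset.sum_const, Finset.card_product, Finset.card_singleton, mul_one, nsmul_eq_mul,
      fiber_card]
  have hpow : (2 : ℝ) ^ n = 2 ^ O.card * 2 ^ (n - O.card) := by
    rw [← pow_add]; congr 1; omega
  have hCp : 0 < (2 : ℝ) ^ (m + O.card) / (2 : ℝ) ^ n + (2 : ℝ) ^ m * ε := by positivity
  have hNi : 0 ≤ N⁻¹ := by positivity
  clear_value N
  refine mi_gen (fun _ => N⁻¹)
    (fun ω : (Fin n → ZMod 2) × (Fin n' → ZMod 2) × {g // g ∈ 𝓖A} × 𝓗 => ω.2.2.1.1 ω.1)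
    (fun ω => ((fun i : {i // i ∈ O} => ω.1 i), ω.2.1, ω.2.2.1, ω.2.2.2))
    (fun v => (Φ v.1 v.2.1 v.2.2.2, v.2.2.1, v.2.2.2)) (fun _ => hNi) ?_ ?_ _ hCp ?_
  · rw [Finset.sum_const, Finset.card_univ, nsmul_eq_mul, hcardN]
    exact mul_inv_cancel₀ hNp.ne'
  · intro v
    rw [hrv]; positivity
  · have hb := coll_bound n m O ε hε 𝓖A h𝓖A hAU
    simp_rw [hrv]
    have e : ∑ v : ({i // i ∈ O} → ZMod 2) × (Fin n' → ZMod 2) × {g // g ∈ 𝓖A} × 𝓗,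
        ∑ a : Fin m → ZMod 2,
        (∑ ω ∈ Finset.univ.filter
          (fun ω : (Fin n → ZMod 2) × (Fin n' → ZMod 2) × {g // g ∈ 𝓖A} × 𝓗 =>
          ω.2.2.1.1 ω.1 = a ∧
          ((fun i : {i // i ∈ O} => ω.1 i), ω.2.1, ω.2.2.1, ω.2.2.2) = v), N⁻¹) ^ 2 /
          (2 ^ (n - O.card) * N⁻¹)
        = (2 ^ n' * Fintype.card 𝓗 * (N⁻¹ / 2 ^ (n - O.card))) *
          ∑ s : {i // i ∈ O} → ZMod 2, ∑ g : {g // g ∈ 𝓖A}, ∑ a : Fin m → ZMod 2,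
          ((Finset.univ.filter (fun x : Fin n → ZMod 2 =>
          g.1 x = a ∧ (fun i : {i // i ∈ O} => x i) = s)).card : ℝ) ^ 2 := by
      simp only [Fintype.sum_prod_type, c1, Finset.sum_const, Finset.card_product,
        Finset.card_singleton, mul_one, nsmul_eq_mul, Finset.card_univ, Fintype.card_pi,
        ZMod.card, Finset.prod_const, Fintype.card_fin, Nat.cast_pow, Nat.cast_ofNat,
        Finset.mul_sum]
      refine Finset.sum_congr rfl fun s _ => Finset.sum_congr rfl fun g _ =>
        Finset.sum_congr rfl fun a _ => ?_
      field_simp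
    refine le_trans (le_of_eq (congrArg _ e)) ?_
    have hcardA : (Fintype.card (Fin m → ZMod 2) : ℝ) = 2 ^ m := by simp [ZMod.card]
    rw [hcardA]
    calc _ ≤ (2:ℝ) ^ m * ((2 ^ n' * Fintype.card 𝓗 * (N⁻¹ / 2 ^ (n - O.card))) *
          (2 ^ n * 𝓖A.card * (1 + 2 ^ (n - O.card) * ε))) := by gcongr
      _ = _ := by
        rw [hN, pow_add, hpow]
        field_simp
end
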